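/- For every α > 1 there exist constants C > 0 and m₀ > 0 such that for every m > m₀ there exist a nonnegative integer ℓ and a positive zero j of J_ℓ satisfying 0 < j² − α²ℓ² + m ≤ C·√m. -/

import Mathlib

open Real Set

/-- The Bessel function of the first kind of order `ν`. -/
noncomputable def besselJ (ν x : ℝ) : ℝ :=
  ∑' m : ℕ, (-1 : ℝ) ^ m / (m.factorial * Real.Gamma (m + ν + 1)) * (x / 2) ^ (2 * (m : ℝ) + ν)

/-- `j` is a positive zero of the Bessel function `J_ν`. -/
def IsPosBesselZero (ν j : ℝ) : Prop := 0 < j ∧ besselJ ν j = 0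

/-- Auxiliary entire function. -/
noncomputable def auxG (n : ℕ) (t : ℝ) : ℝ :=
  ∑' k : ℕ, (-1 : ℝ) ^ k / (k.factorial * (k + n).factorial) * t ^ k

lemma auxG_bound (n k : ℕ) (t R : ℝ) (h : |t| ≤ R) :
    ‖(-1 : ℝ) ^ k / (k.factorial * (k + n).factorial) * t ^ k‖ ≤ R ^ k / k.factorial := by
  have h1 : (1 : ℝ) ≤ ((k + n).factorial : ℝ) := by
    exact_mod_cast Nat.one_le_iff_ne_zero.mpr (Nat.factorial_ne_zero _)
  have h2 : (0 : ℝ) < (k.factorial : ℝ) := by exact_mod_cast Nat.factorial_pos k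
  rw [norm_mul, norm_div, norm_pow, norm_neg, norm_one, one_pow, norm_pow, Real.norm_eq_abs,
    Real.norm_eq_abs, abs_of_pos (by positivity), div_mul_eq_mul_div, one_mul]
  have h3 : |t| ^ k ≤ R ^ k := pow_le_pow_left₀ (abs_nonneg t) h k
  apply div_le_div₀ (le_trans (by positivity) h3) h3 h2
  nlinarith

lemma auxG_summable (n : ℕ) (t : ℝ) :
    Summable fun k : ℕ => (-1 : ℝ) ^ k / (k.factorial * (k + n).factorial) * t ^ k :=
  Summable.of_norm_bounded (Real.summable_pow_div_factorial |t|)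
    (fun k => auxG_bound n k t _ le_rfl)

lemma auxG_succ (n : ℕ) (t : ℝ) : auxG n t = 1 / (n.factorial : ℝ) +
    ∑' k : ℕ, (-1 : ℝ) ^ (k + 1) / ((k + 1).factorial * (k + 1 + n).factorial) * t ^ (k + 1) := by
  unfold auxG
  rw [(auxG_summable n t).tsum_eq_zero_add]
  simp

lemma auxG_hasDerivAt (n : ℕ) (t : ℝ) : HasDerivAt (auxG n) (-auxG (n + 1) t) t := by
  have key := hasDerivAt_tsum_of_isPreconnected
    (g := fun (k : ℕ) (z : ℝ) =>
      (-1 : ℝ) ^ (k + 1) / ((k + 1).factorial * (k + 1 + n).factorial) * z ^ (k + 1))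
    (g' := fun (k : ℕ) (z : ℝ) =>
      -((-1 : ℝ) ^ k / (k.factorial * (k + (n + 1)).factorial) * z ^ k))
    (u := fun k : ℕ => (|t| + 1) ^ k / k.factorial)
    (t := Metric.ball (0 : ℝ) (|t| + 1)) (y₀ := t) (y := t)
    (Real.summable_pow_div_factorial _) Metric.isOpen_ball
    (convex_ball (0 : ℝ) _).isPreconnected ?_ ?_ ?_ ?_ ?_
  · have h2 := key.const_add (1 / (n.factorial : ℝ))
    rw [tsum_neg] at h2
    have : auxG n = fun z => 1 / (n.factorial : ℝ) + ∑' k : ℕ,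
      (-1 : ℝ) ^ (k + 1) / ((k + 1).factorial * (k + 1 + n).factorial) * z ^ (k + 1) :=
      funext (auxG_succ n)
    rw [this]
    exact h2
  · intro k y _
    have h := (hasDerivAt_pow (k + 1) y).const_mul
      ((-1 : ℝ) ^ (k + 1) / ((k + 1).factorial * (k + 1 + n).factorial))
    refine h.congr_deriv ?_
    have e : k + 1 + n = k + (n + 1) := by ring
    rw [e, Nat.factorial_succ k]
    have h2 : (k.factorial : ℝ) ≠ 0 := by exact_mod_cast Nat.factorial_ne_zero k
    have h3 : ((k + (n + 1)).factorial : ℝ) ≠ 0 := by exact_mod_cast Nat.factorial_ne_zero _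
    have h4 : (k : ℝ) + 1 ≠ 0 := by positivity
    push_cast
    try simp only [Nat.add_sub_cancel]
    field_simp
    ring
  · intro k y hy
    rw [norm_neg]
    apply auxG_bound
    rw [mem_ball_zero_iff, Real.norm_eq_abs] at hy
    exact hy.le
  · rw [mem_ball_zero_iff, Real.norm_eq_abs]; linarith
  · exact (summable_nat_add_iff 1).mpr (auxG_summable n t)
  · rw [mem_ball_zero_iff, Real.norm_eq_abs]; linarith

lemma auxG_rec (n : ℕ) (t : ℝ) :
    auxG n t = (n + 1) * auxG (n + 1) t - t * auxG (n + 2) t := by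
  have h1 := auxG_succ n t
  have h2 := auxG_succ (n + 1) t
  have s1 := (summable_nat_add_iff 1).mpr (auxG_summable (n + 1) t)
  have s2 := auxG_summable (n + 2) t
  have f : ∀ j : ℕ, (j.factorial : ℝ) ≠ 0 := fun j => by exact_mod_cast Nat.factorial_ne_zero j
  rw [h1, h2, mul_add]
  unfold auxG
  rw [← tsum_mul_left, ← tsum_mul_left, add_sub_assoc,
    ← Summable.tsum_sub (s1.mul_left _) (s2.mul_left _)]
  congr 1
  · rw [Nat.factorial_succ]
    have := f n
    have h4 : (n : ℝ) + 1 ≠ 0 := by positivity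
    push_cast
    field_simp
  · congr 1
    ext k
    have e1 : k + 1 + (n + 1) = k + 1 + n + 1 := by ring
    have e2 : k + (n + 2) = k + 1 + n + 1 := by ring
    rw [e1, e2, Nat.factorial_succ (k + 1 + n), Nat.factorial_succ k]
    have := f k
    have := f (k + 1 + n)
    have h4 : (k : ℝ) + 1 ≠ 0 := by positivity
    have h5 : (k : ℝ) + 1 + n + 1 ≠ 0 := by positivity
    push_cast
    field_simp
    ring

lemma besselJ_eq (n : ℕ) (x : ℝ) (hx : 0 < x) :
    besselJ n x = (x / 2) ^ n * auxG n (x ^ 2 / 4) := by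
  unfold besselJ auxG
  rw [← tsum_mul_left]
  congr 1
  ext k
  have e1 : (k : ℝ) + n + 1 = ((k + n : ℕ) : ℝ) + 1 := by push_cast; ring
  have e2 : 2 * (k : ℝ) + n = ((2 * k + n : ℕ) : ℝ) := by push_cast; ring
  have e3 : x ^ 2 / 4 = (x / 2) ^ 2 := by ring
  rw [e1, e2, Real.Gamma_nat_eq_factorial, Real.rpow_natCast, e3, pow_add, pow_mul]
  ring

lemma sturm_pos (u u1 q : ℝ → ℝ) (κ a : ℝ) (hκ : 0 < κ)
    (hu : ∀ x ∈ Icc a (a + π / κ), HasDerivAt u (u1 x) x)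
    (hu1 : ∀ x ∈ Icc a (a + π / κ), HasDerivAt u1 (-(q x * u x)) x)
    (hq : ∀ x ∈ Icc a (a + π / κ), κ ^ 2 ≤ q x)
    (hpos : ∀ x ∈ Icc a (a + π / κ), 0 < u x) : False := by
  have hpk : 0 < π / κ := by positivity
  have hW : ∀ x ∈ Icc a (a + π / κ), HasDerivAt
      (fun x => u x * (κ * cos (κ * (x - a))) - u1 x * sin (κ * (x - a)))
      ((q x - κ ^ 2) * u x * sin (κ * (x - a))) x := by
    intro x hx
    have hl : HasDerivAt (fun x => κ * (x - a)) κ x := by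
      simpa using ((hasDerivAt_id x).sub_const a).const_mul κ
    have h := ((hu x hx).mul (hl.cos.const_mul κ)).sub ((hu1 x hx).mul hl.sin)
    refine h.congr_deriv ?_
    ring
  obtain ⟨c, hc, hce⟩ := exists_hasDerivAt_eq_slope _ _ (by linarith : a < a + π / κ)
    (fun x hx => (hW x hx).continuousAt.continuousWithinAt)
    (fun x hx => hW x (Ioo_subset_Icc_self hx))
  have hc' := Ioo_subset_Icc_self hc
  have hs : 0 ≤ sin (κ * (c - a)) := by
    apply sin_nonneg_of_nonneg_of_le_pi
    · exact mul_nonneg hκ.le (by linarith [hc.1])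
    · have : c - a ≤ π / κ := by linarith [hc.2]
      rw [le_div_iff₀ hκ] at this
      linarith
  have h1 : 0 ≤ (q c - κ ^ 2) * u c * sin (κ * (c - a)) :=
    mul_nonneg (mul_nonneg (by linarith [hq c hc']) (hpos c hc').le) hs
  have e : κ * (a + π / κ - a) = π := by field_simp; ring
  rw [hce, e] at h1
  simp only [sub_self, mul_zero, cos_zero, sin_zero, cos_pi, sin_pi] at h1
  have h2 := hpos a ⟨le_rfl, by linarith⟩
  have h3 := hpos (a + π / κ) ⟨by linarith, le_rfl⟩
  have h4 := mul_pos h2 hκ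
  have h5 := mul_pos h3 hκ
  have : (u (a + π / κ) * (κ * -1) - 0 - (u a * (κ * 1) - 0)) / (a + π / κ - a) < 0 :=
    div_neg_of_neg_of_pos (by linarith) (by linarith)
  linarith

lemma sturm (u u1 q : ℝ → ℝ) (κ a : ℝ) (hκ : 0 < κ)
    (hu : ∀ x ∈ Icc a (a + π / κ), HasDerivAt u (u1 x) x)
    (hu1 : ∀ x ∈ Icc a (a + π / κ), HasDerivAt u1 (-(q x * u x)) x)
    (hq : ∀ x ∈ Icc a (a + π / κ), κ ^ 2 ≤ q x) :
    ∃ x ∈ Icc a (a + π / κ), u x = 0 := by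
  by_contra! hne
  have hcont : ContinuousOn u (Icc a (a + π / κ)) :=
    fun x hx => (hu x hx).continuousAt.continuousWithinAt
  have hpk : 0 < π / κ := by positivity
  have ha : a ∈ Icc a (a + π / κ) := ⟨le_rfl, by linarith⟩
  have ivt : ∀ x ∈ Icc a (a + π / κ), ∀ y ∈ Icc a (a + π / κ), u x < 0 → 0 < u y → False := by
    intro x hx y hy h1 h2
    obtain ⟨z, hz, hz0⟩ := isPreconnected_Icc.intermediate_value hx hy hcont ⟨h1.le, h2.le⟩
    exact hne z hz hz0
  rcases lt_or_gt_of_ne (hne a ha) with h | h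
  · refine sturm_pos (fun x => -u x) (fun x => -u1 x) q κ a hκ (fun x hx => (hu x hx).neg)
      (fun x hx => ((hu1 x hx).neg).congr_deriv (by ring)) hq (fun x hx => ?_)
    rcases lt_or_gt_of_ne (hne x hx) with h' | h'
    · linarith
    · exact (ivt a ha x hx h h').elim
  · refine sturm_pos u u1 q κ a hκ hu hu1 hq (fun x hx => ?_)
    rcases lt_or_gt_of_ne (hne x hx) with h' | h'
    · exact (ivt x hx a ha h' h).elim
    · exact h'

lemma bessel_zero (n : ℕ) (κ a : ℝ) (hκ : 0 < κ) (ha : 0 < a)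
    (hq : (n : ℝ) ^ 2 ≤ (1 - κ ^ 2) * a ^ 2) :
    ∃ x ∈ Icc a (a + π / κ), besselJ n x = 0 := by
  have hsq : ∀ x : ℝ, HasDerivAt (fun x : ℝ => x ^ 2 / 4) (x / 2) x := fun x =>
    ((hasDerivAt_pow 2 x).div_const 4).congr_deriv (by norm_num; ring)
  have hG : ∀ (k : ℕ) (x : ℝ), HasDerivAt (fun x : ℝ => auxG k (x ^ 2 / 4))
      (-auxG (k + 1) (x ^ 2 / 4) * (x / 2)) x := fun k x =>
    HasDerivAt.comp (h₂ := auxG k) (h := fun x : ℝ => x ^ 2 / 4) x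
      (auxG_hasDerivAt k (x ^ 2 / 4)) (hsq x)
  have hp : ∀ x : ℝ, 0 < x → HasDerivAt (fun x : ℝ => x ^ ((n : ℝ) + 1 / 2))
      (((n : ℝ) + 1 / 2) * x ^ ((n : ℝ) + 1 / 2) / x) x := fun x hx => by
    refine (Real.hasDerivAt_rpow_const (Or.inl hx.ne')).congr_deriv ?_
    rw [Real.rpow_sub_one hx.ne']
    ring
  have key := sturm (fun x => x ^ ((n : ℝ) + 1 / 2) * auxG n (x ^ 2 / 4))
    (fun x => x ^ ((n : ℝ) + 1 / 2) *
      (((n : ℝ) + 1 / 2) * x⁻¹ * auxG n (x ^ 2 / 4) - x / 2 * auxG (n + 1) (x ^ 2 / 4)))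
    (fun x => 1 - ((n : ℝ) ^ 2 - 1 / 4) / x ^ 2) κ a hκ ?_ ?_ ?_
  · obtain ⟨x, hx, h0⟩ := key
    refine ⟨x, hx, ?_⟩
    have hx0 : 0 < x := lt_of_lt_of_le ha hx.1
    rw [besselJ_eq n x hx0]
    rcases mul_eq_zero.mp h0 with h | h
    · exact absurd h (Real.rpow_pos_of_pos hx0 _).ne'
    · rw [h, mul_zero]
  · intro x hx
    have hx0 : 0 < x := lt_of_lt_of_le ha hx.1
    refine ((hp x hx0).mul (hG n x)).congr_deriv ?_
    field_simp
    ring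
  · intro x hx
    have hx0 : 0 < x := lt_of_lt_of_le ha hx.1
    have hr := auxG_rec n (x ^ 2 / 4)
    have hd := (hp x hx0).mul ((((hasDerivAt_inv hx0.ne').const_mul ((n : ℝ) + 1 / 2)).mul
      (hG n x)).sub (((hasDerivAt_id x).div_const 2).mul (hG (n + 1) x)))
    refine hd.congr_deriv ?_
    simp only [id, Pi.mul_apply, Pi.sub_apply]
    have e : auxG (n + 1 + 1) (x ^ 2 / 4) = 
      ((n + 1) * auxG (n + 1) (x ^ 2 / 4) - auxG n (x ^ 2 / 4)) * 4 / x ^ 2 := by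
      rw [hr]; field_simp; ring
    rw [e]
    field_simp
    ring
  · intro x hx
    have hx0 : 0 < x := lt_of_lt_of_le ha hx.1
    have h1 : a ^ 2 ≤ x ^ 2 := pow_le_pow_left₀ ha.le hx.1 2
    have h2 : 0 ≤ 1 - κ ^ 2 := by
      by_contra hh
      have : 0 < a ^ 2 := by positivity
      nlinarith [sq_nonneg (n : ℝ)]
    have : ((n : ℝ) ^ 2 - 1 / 4) / x ^ 2 ≤ 1 - κ ^ 2 := by
      rw [div_le_iff₀ (by positivity)]
      nlinarith
    linarith

theorem stmt_14 (α : ℝ) (hα : 1 < α) :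
    ∃ C m₀ : ℝ, 0 < C ∧ 0 < m₀ ∧ ∀ m : ℝ, m₀ < m →
      ∃ (ℓ : ℕ) (j : ℝ), IsPosBesselZero ℓ j ∧
        0 < j ^ 2 - α ^ 2 * (ℓ : ℝ) ^ 2 + m ∧
        j ^ 2 - α ^ 2 * (ℓ : ℝ) ^ 2 + m ≤ C * Real.sqrt m := by
  have hα2 : 0 < α ^ 2 - 1 := by nlinarith
  obtain ⟨A, hA⟩ : ∃ A, A = √(2 / (α ^ 2 - 1)) := ⟨_, rfl⟩
  have hA0 : 0 ≤ A := hA ▸ Real.sqrt_nonneg _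
  have hA2 : A ^ 2 * (α ^ 2 - 1) = 2 := by
    rw [hA, Real.sq_sqrt (by positivity)]; field_simp
  obtain ⟨κ, hκe⟩ : ∃ κ, κ = √((α ^ 2 - 1) / (α ^ 2 + 1)) := ⟨_, rfl⟩
  have hκ : 0 < κ := by rw [hκe]; exact Real.sqrt_pos.mpr (by positivity)
  have hκ2 : (1 - κ ^ 2) * (α ^ 2 + 1) = 2 := by
    rw [hκe, Real.sq_sqrt (by positivity)]; field_simp; ring
  obtain ⟨D, hD⟩ : ∃ D, D = 1 + π / κ := ⟨_, rfl⟩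
  have hD0 : 0 < D := by rw [hD]; positivity
  refine ⟨D * (2 * α * (A + 1) + D), 1, by positivity, one_pos, fun m hm => ?_⟩
  have hs1 : 1 ≤ √m := Real.one_le_sqrt.mpr hm.le
  have hs2 : √m ^ 2 = m := Real.sq_sqrt (by linarith)
  obtain ⟨n, hn⟩ : ∃ n : ℕ, n = ⌈A * √m⌉₊ := ⟨_, rfl⟩
  have hn1 : A * √m ≤ n := hn ▸ Nat.le_ceil _
  have hn2 : (n : ℝ) ≤ (A + 1) * √m := by
    have := (Nat.ceil_lt_add_one (by positivity : 0 ≤ A * √m)).le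
    rw [← hn] at this
    linarith
  have hn3 : 2 * m ≤ (n : ℝ) ^ 2 * (α ^ 2 - 1) := by
    have h := pow_le_pow_left₀ (by positivity) hn1 2
    rw [mul_pow, hs2] at h
    have := mul_le_mul_of_nonneg_right h hα2.le
    calc 2 * m = A ^ 2 * m * (α ^ 2 - 1) := by rw [← hA2]; ring
      _ ≤ _ := this
  have hX : 0 < α ^ 2 * (n : ℝ) ^ 2 - m := by nlinarith [sq_nonneg (n : ℝ)]
  obtain ⟨y, hy⟩ : ∃ y, y = √(α ^ 2 * (n : ℝ) ^ 2 - m) := ⟨_, rfl⟩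
  have hy0 : 0 ≤ y := hy ▸ Real.sqrt_nonneg _
  have hy2 : y ^ 2 = α ^ 2 * (n : ℝ) ^ 2 - m := by rw [hy, Real.sq_sqrt hX.le]
  have hyn : y ≤ α * n := by
    apply abs_le_of_sq_le_sq' _ (by positivity) |>.2
    nlinarith
  have hκ1 : 0 < 1 - κ ^ 2 := by
    by_contra hh
    nlinarith
  obtain ⟨j, hj, hj0⟩ := bessel_zero n κ (y + 1) hκ (by linarith) (by
    have h1 : (α ^ 2 + 1) * (n : ℝ) ^ 2 ≤ 2 * (y + 1) ^ 2 := by nlinarith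
    have := mul_le_mul_of_nonneg_left h1 hκ1.le
    have e : (1 - κ ^ 2) * ((α ^ 2 + 1) * (n : ℝ) ^ 2) = 2 * (n : ℝ) ^ 2 := by
      rw [← mul_assoc, hκ2]
    linarith)
  have hj1 := hj.1
  have hj2 : j ≤ y + D := by rw [hD]; linarith [hj.2]
  have e : j ^ 2 - α ^ 2 * (n : ℝ) ^ 2 + m = j ^ 2 - y ^ 2 := by rw [hy2]; ring
  refine ⟨n, j, ⟨by linarith, hj0⟩, ?_, ?_⟩
  · rw [e]; nlinarith
  · rw [e]
    have h1 : j ^ 2 ≤ (y + D) ^ 2 := pow_le_pow_left₀ (by linarith) hj2 2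
    have h2 : α * n ≤ α * ((A + 1) * √m) := mul_le_mul_of_nonneg_left hn2 (by linarith)
    have h3 : D ≤ D * √m := le_mul_of_one_le_right hD0.le hs1
    have h4 : 2 * y + D ≤ (2 * α * (A + 1) + D) * √m := by linarith
    have h5 := mul_le_mul_of_nonneg_left h4 hD0.le
    linarith
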